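/- Let χ : ℝ → ℂ be a smooth function supported in [−1/4, 1/4]. There is a constant C_χ such that for all integers J ≥ 1 and d ≥ 1, all distinct rationals r_1, …, r_J ∈ [0,1) sharing a common denominator D < 2^d, and every f ∈ ℓ²(ℤ), one has ‖ sup_{n > 2d} | Σ_{j=1}^{J} ∫₀¹ χ(2^n(θ − r_j)) f̂(θ) e(xθ) dθ | ‖_{ℓ²(ℤ, dx)} ≤ C_χ ‖f‖_{ℓ²(ℤ)}; the constant C_χ is independent of J, D, d and the choice of the rational points. -/

import Mathlib

open scoped ENNReal

noncomputable section

/-- `e(t) = e^{2πit}`. -/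
def e2pi (t : ℝ) : ℂ := Complex.exp (2 * Real.pi * Complex.I * t)

/-! Choosing for each `x` a scale `t x` that nearly attains the supremum turns the maximal
inequality into a bound, uniform in the choice, on the Gram matrix of the functions
`θ ↦ χ(t x θ) e(xθ)`.
With `P` the Poisson kernel, its entries are `≲ P_{t x}(x - y) + P_{t y}(x - y)`, because `χ` has
two derivatives. Only the row sums of `P_{t x}(x - y)` are uniformly bounded, not its column sums,
but the pointwise inequality `P_s(a) P_t(b) ≤ 2 (P_s(a + b) + P_t(a + b)) (P_s(a) + P_t(b))` and
Cauchy-Schwarz give `Q² ≲ Q ‖h‖²` for its quadratic form `Q` at a nonnegative vector `h`.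

On a residue class mod `D` the phases `e(x r_j)` are constant and all frequencies can be moved to
the origin. There the sum over `x` is `D` times sparser, a gain of `1 / D` which pays exactly for
the orthogonality of the characters mod `D`, applied on the disjoint arcs around the `r_j`. -/

section Multifrequency

open MeasureTheory FourierTransform ComplexConjugate

/-! ### Poisson kernels -/

/-- The Poisson kernel `t / (t² + w²)` at height `t`, up to the factor `π`. -/
def poissonKer (t w : ℝ) : ℝ := t / (t ^ 2 + w ^ 2)

lemma poissonKer_nonneg {t : ℝ} (ht : 0 ≤ t) (w : ℝ) : 0 ≤ poissonKer t w := by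
  unfold poissonKer; positivity

lemma poissonKer_sub_comm (t a b : ℝ) : poissonKer t (a - b) = poissonKer t (b - a) := by
  rw [poissonKer, poissonKer, sub_sq_comm]

lemma poissonKer_mul_mul {c : ℝ} (hc : c ≠ 0) (t w : ℝ) :
    poissonKer (c * t) (c * w) = c⁻¹ * poissonKer t w := by
  unfold poissonKer
  field_simp

lemma poissonKer_mul_le_of_le {s t : ℝ} (hs : 0 < s) (hst : s ≤ t) (a b : ℝ) :
    poissonKer s a * poissonKer t b ≤
      2 * poissonKer t (a + b) * (poissonKer s a + poissonKer t b) := by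
  have ht : 0 < t := hs.trans_le hst
  have cleared : s * (t ^ 2 + (a + b) ^ 2) ≤ 2 * (s * (t ^ 2 + b ^ 2) + t * (s ^ 2 + a ^ 2)) := by
    nlinarith [mul_nonneg hs.le (sq_nonneg (a - b)), mul_nonneg (sub_nonneg.2 hst) (sq_nonneg a),
      mul_nonneg hs.le (sq_nonneg t), mul_nonneg ht.le (sq_nonneg s)]
  calc poissonKer s a * poissonKer t b
      = t * (s * (t ^ 2 + (a + b) ^ 2)) /
          ((s ^ 2 + a ^ 2) * (t ^ 2 + b ^ 2) * (t ^ 2 + (a + b) ^ 2)) := by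
        unfold poissonKer; field_simp
    _ ≤ t * (2 * (s * (t ^ 2 + b ^ 2) + t * (s ^ 2 + a ^ 2))) /
          ((s ^ 2 + a ^ 2) * (t ^ 2 + b ^ 2) * (t ^ 2 + (a + b) ^ 2)) := by gcongr
    _ = 2 * poissonKer t (a + b) * (poissonKer s a + poissonKer t b) := by
        unfold poissonKer; field_simp

lemma poissonKer_mul_le {s t : ℝ} (hs : 0 < s) (ht : 0 < t) (a b : ℝ) :
    poissonKer s a * poissonKer t b ≤
      2 * (poissonKer s (a + b) + poissonKer t (a + b)) * (poissonKer s a + poissonKer t b) := by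
  have hsum : 0 ≤ poissonKer s a + poissonKer t b :=
    add_nonneg (poissonKer_nonneg hs.le a) (poissonKer_nonneg ht.le b)
  rcases le_total s t with hst | hts
  · refine (poissonKer_mul_le_of_le hs hst a b).trans ?_
    gcongr
    exact le_add_of_nonneg_left (poissonKer_nonneg hs.le _)
  · rw [mul_comm, add_comm (poissonKer s a), add_comm a] at *
    refine (poissonKer_mul_le_of_le ht hts b a).trans ?_
    gcongr
    exact le_add_of_nonneg_right (poissonKer_nonneg ht.le _)

lemma antitoneOn_poissonKer {t : ℝ} (ht : 0 < t) : AntitoneOn (poissonKer t) (Set.Ici 0) := by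
  intro v hv w _ hvw
  have hv : 0 ≤ v := hv
  unfold poissonKer
  gcongr

lemma integral_poissonKer {t : ℝ} (ht : t ≠ 0) (b : ℝ) :
    ∫ w in (0 : ℝ)..b, poissonKer t w = Real.arctan (b / t) := by
  have hscale (w : ℝ) : poissonKer t w = t⁻¹ * (1 + (w / t) ^ 2)⁻¹ := by
    unfold poissonKer; field_simp
  simp_rw [hscale]
  rw [intervalIntegral.integral_const_mul,
    intervalIntegral.integral_comp_div (fun w => (1 + w ^ 2)⁻¹) ht, integral_inv_one_add_sq]
  simp [ht]

lemma sum_range_poissonKer_le {t : ℝ} (ht : 1 ≤ t) (N : ℕ) :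
    ∑ i ∈ Finset.range N, poissonKer t i ≤ 3 := by
  have ht0 : 0 < t := zero_lt_one.trans_le ht
  have hzero : poissonKer t 0 ≤ 1 := by
    unfold poissonKer
    rw [div_le_one (by positivity)]
    nlinarith
  have htail : ∑ i ∈ Finset.range N, poissonKer t ((i + 1 : ℕ) : ℝ) ≤ 2 :=
    calc ∑ i ∈ Finset.range N, poissonKer t ((i + 1 : ℕ) : ℝ)
        ≤ ∫ w in (0 : ℝ)..N, poissonKer t w := by
          have := AntitoneOn.sum_le_integral (f := poissonKer t) (x₀ := 0) (a := N)
            ((antitoneOn_poissonKer ht0).mono Set.Icc_subset_Ici_self)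
          simpa only [zero_add] using this
      _ = Real.arctan (N / t) := integral_poissonKer ht0.ne' N
      _ ≤ Real.pi / 2 := (Real.arctan_lt_pi_div_two _).le
      _ ≤ 2 := by linarith [Real.pi_le_four]
  calc ∑ i ∈ Finset.range N, poissonKer t i
      ≤ ∑ i ∈ Finset.range (N + 1), poissonKer t i :=
        Finset.sum_le_sum_of_subset_of_nonneg (Finset.range_mono N.le_succ)
          fun i _ _ => poissonKer_nonneg ht0.le _
    _ ≤ 3 := by
        rw [Finset.sum_range_succ', Nat.cast_zero]
        linarith

lemma sum_intCast_poissonKer_le {t : ℝ} (ht : 1 ≤ t) (Z : Finset ℤ) :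
    ∑ z ∈ Z, poissonKer t z ≤ 6 := by
  have halfLine (W : Finset ℤ) (hW : Set.InjOn Int.natAbs W) : ∑ z ∈ W, poissonKer t z ≤ 3 := by
    obtain ⟨N, hN⟩ := (W.image Int.natAbs).exists_nat_subset_range
    calc ∑ z ∈ W, poissonKer t z = ∑ i ∈ W.image Int.natAbs, poissonKer t i := by
          rw [Finset.sum_image hW]
          simp [poissonKer, Nat.cast_natAbs]
      _ ≤ ∑ i ∈ Finset.range N, poissonKer t i :=
          Finset.sum_le_sum_of_subset_of_nonneg hN fun i _ _ => poissonKer_nonneg (by linarith) _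
      _ ≤ 3 := sum_range_poissonKer_le ht N
  rw [← Finset.sum_filter_add_sum_filter_not Z (fun z => 0 ≤ z)]
  have hpos := halfLine (Z.filter fun z => 0 ≤ z) fun a ha b hb hab => by
    simp only [Finset.coe_filter, Set.mem_ofPred_eq] at ha hb; omega
  have hneg := halfLine (Z.filter fun z => ¬ 0 ≤ z) fun a ha b hb hab => by
    simp only [Finset.coe_filter, Set.mem_ofPred_eq] at ha hb; omega
  linarith

lemma sum_poissonKer_sub_le_of_dvd {D : ℕ} (hD : D ≠ 0) {t : ℝ} (ht : D ≤ t) {x : ℤ}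
    {Z : Finset ℤ} (hZ : ∀ z ∈ Z, (D : ℤ) ∣ x - z) :
    ∑ z ∈ Z, poissonKer t ((x : ℝ) - z) ≤ 6 / D := by
  have hD0 : (0 : ℝ) < D := by positivity
  let quot : ℤ → ℤ := fun z => (x - z) / D
  have quot_spec {z : ℤ} (hz : z ∈ Z) : x - z = D * quot z := (Int.mul_ediv_cancel' (hZ z hz)).symm
  have quot_injOn : Set.InjOn quot Z := fun a ha b hb hab => by
    have hab' : x - a = x - b := by rw [quot_spec ha, quot_spec hb, hab]
    omega
  calc ∑ z ∈ Z, poissonKer t ((x : ℝ) - z)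
      = ∑ z ∈ Z, (D : ℝ)⁻¹ * poissonKer (t / D) (quot z) := by
        refine Finset.sum_congr rfl fun z hz => ?_
        rw [← poissonKer_mul_mul hD0.ne', mul_div_cancel₀ t hD0.ne']
        exact_mod_cast congrArg (fun w : ℤ => poissonKer t w) (quot_spec hz)
    _ = (D : ℝ)⁻¹ * ∑ k ∈ Z.image quot, poissonKer (t / D) k := by
        rw [Finset.sum_image quot_injOn, Finset.mul_sum]
    _ ≤ (D : ℝ)⁻¹ * 6 := by
        gcongr
        exact sum_intCast_poissonKer_le ((one_le_div hD0).2 ht) _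
    _ = 6 / D := by ring

/-! ### Finite quadratic forms -/

lemma sum_sum_mul_mul_add_swap {α : Type*} (X : Finset α) (k : α → α → ℝ) (h : α → ℝ) :
    ∑ x ∈ X, ∑ y ∈ X, h x * h y * (k x y + k y x) =
      2 * ∑ x ∈ X, ∑ y ∈ X, h x * h y * k x y := by
  have swap : ∑ x ∈ X, ∑ y ∈ X, h x * h y * k y x = ∑ x ∈ X, ∑ y ∈ X, h x * h y * k x y := by
    rw [Finset.sum_comm]
    simp_rw [mul_comm (h _) (h _)]
  simp_rw [mul_add, Finset.sum_add_distrib, swap, two_mul]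

lemma sum_sq_sum_mul_eq {α β R : Type*} [CommSemiring R] (X : Finset α) (Z : Finset β)
    (h : α → R) (k : α → β → R) :
    ∑ z ∈ Z, (∑ x ∈ X, h x * k x z) ^ 2 =
      ∑ x ∈ X, ∑ y ∈ X, h x * h y * ∑ z ∈ Z, k x z * k y z := by
  simp_rw [sq, Finset.sum_mul_sum, Finset.mul_sum]
  rw [Finset.sum_comm]
  refine Finset.sum_congr rfl fun x _ => ?_
  rw [Finset.sum_comm]
  exact Finset.sum_congr rfl fun y _ => Finset.sum_congr rfl fun z _ => by ring

lemma sum_sum_mul_le_of_mul_le {α : Type*} {X : Finset α} {k : α → α → ℝ} {c S : ℝ} (hc : 0 ≤ c)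
    (hS : 0 ≤ S) (hk : ∀ x ∈ X, ∀ y ∈ X, 0 ≤ k x y)
    (hmul : ∀ x ∈ X, ∀ y ∈ X, ∀ z ∈ X,
      k x z * k y z ≤ c * (k x y + k y x) * (k x z + k y z))
    (hrow : ∀ x ∈ X, ∑ z ∈ X, k x z ≤ S) {h : α → ℝ} (hh : ∀ x ∈ X, 0 ≤ h x) :
    ∑ x ∈ X, ∑ y ∈ X, h x * h y * k x y ≤ 4 * c * S * ∑ x ∈ X, h x ^ 2 := by
  set Q := ∑ x ∈ X, ∑ y ∈ X, h x * h y * k x y with hQ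
  let v : α → ℝ := fun z => ∑ x ∈ X, h x * k x z
  have row_product {x y : α} (hx : x ∈ X) (hy : y ∈ X) :
      ∑ z ∈ X, k x z * k y z ≤ c * (k x y + k y x) * (S + S) := by
    refine (Finset.sum_le_sum (hmul x hx y hy)).trans ?_
    rw [← Finset.mul_sum, Finset.sum_add_distrib]
    have := add_nonneg (hk x hx y hy) (hk y hy x hx)
    gcongr
    exacts [hrow x hx, hrow y hy]
  have sum_v_sq : ∑ z ∈ X, v z ^ 2 ≤ 4 * c * S * Q :=
    calc ∑ z ∈ X, v z ^ 2 = ∑ x ∈ X, ∑ y ∈ X, h x * h y * ∑ z ∈ X, k x z * k y z :=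
          sum_sq_sum_mul_eq X X h k
      _ ≤ ∑ x ∈ X, ∑ y ∈ X, h x * h y * (c * (k x y + k y x) * (S + S)) := by
          refine Finset.sum_le_sum fun x hx => Finset.sum_le_sum fun y hy => ?_
          exact mul_le_mul_of_nonneg_left (row_product hx hy) (mul_nonneg (hh x hx) (hh y hy))
      _ = 2 * c * S * ∑ x ∈ X, ∑ y ∈ X, h x * h y * (k x y + k y x) := by
          simp_rw [Finset.mul_sum]
          exact Finset.sum_congr rfl fun x _ => Finset.sum_congr rfl fun y _ => by ring
      _ = 4 * c * S * Q := by rw [sum_sum_mul_mul_add_swap]; ring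
  have Q_eq : Q = ∑ z ∈ X, h z * v z := by
    simp_rw [hQ, v, Finset.mul_sum]
    rw [Finset.sum_comm]
    exact Finset.sum_congr rfl fun y _ => Finset.sum_congr rfl fun x _ => by ring
  have Q_nonneg : 0 ≤ Q := Finset.sum_nonneg fun x hx => Finset.sum_nonneg fun y hy =>
    mul_nonneg (mul_nonneg (hh x hx) (hh y hy)) (hk x hx y hy)
  have Q_sq : Q * Q ≤ (4 * c * S * ∑ x ∈ X, h x ^ 2) * Q :=
    calc Q * Q = (∑ z ∈ X, h z * v z) ^ 2 := by rw [← Q_eq, sq]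
      _ ≤ (∑ z ∈ X, h z ^ 2) * ∑ z ∈ X, v z ^ 2 := Finset.sum_mul_sq_le_sq_mul_sq X h v
      _ ≤ (∑ z ∈ X, h z ^ 2) * (4 * c * S * Q) := by gcongr
      _ = (4 * c * S * ∑ x ∈ X, h x ^ 2) * Q := by ring
  rcases Q_nonneg.eq_or_lt with Q_zero | Q_pos
  · rw [← Q_zero]; positivity
  · exact le_of_mul_le_mul_right Q_sq Q_pos

lemma sum_norm_inner_sq_le {𝕜 E α : Type*} [RCLike 𝕜] [SeminormedAddCommGroup E]
    [InnerProductSpace 𝕜 E] {X : Finset α} {v : α → E} {B : ℝ} (hB : 0 ≤ B)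
    (hgram : ∀ a : α → ℝ, (∀ x ∈ X, 0 ≤ a x) →
      ∑ x ∈ X, ∑ y ∈ X, a x * a y * ‖inner 𝕜 (v x) (v y)‖ ≤ B * ∑ x ∈ X, a x ^ 2) (g : E) :
    ∑ x ∈ X, ‖inner 𝕜 (v x) g‖ ^ 2 ≤ B * ‖g‖ ^ 2 := by
  set T := ∑ x ∈ X, ‖inner 𝕜 (v x) g‖ ^ 2 with hT
  have T_nonneg : 0 ≤ T := Finset.sum_nonneg fun _ _ => sq_nonneg _
  let w : E := ∑ x ∈ X, inner 𝕜 (v x) g • v x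
  have inner_w_g : inner 𝕜 w g = (T : 𝕜) := by
    simp_rw [w, sum_inner, inner_smul_left, RCLike.conj_mul, hT]
    push_cast
    rfl
  have norm_w_sq : ‖w‖ ^ 2 ≤ B * T :=
    calc ‖w‖ ^ 2 = ‖inner 𝕜 w w‖ := by
          rw [inner_self_eq_norm_sq_to_K, norm_pow, RCLike.norm_ofReal, abs_norm]
      _ = ‖∑ x ∈ X, ∑ y ∈ X,
            conj (inner 𝕜 (v x) g) * (inner 𝕜 (v y) g * inner 𝕜 (v x) (v y))‖ := by
          simp_rw [w, sum_inner, inner_sum, inner_smul_left, inner_smul_right]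
      _ ≤ ∑ x ∈ X, ∑ y ∈ X,
            ‖inner 𝕜 (v x) g‖ * ‖inner 𝕜 (v y) g‖ * ‖inner 𝕜 (v x) (v y)‖ := by
          refine norm_sum_le_of_le _ fun x _ => norm_sum_le_of_le _ fun y _ => ?_
          rw [norm_mul, norm_mul, RCLike.norm_conj, mul_assoc]
      _ ≤ B * T := hgram _ fun _ _ => norm_nonneg _
  have T_sq : T * T ≤ (B * ‖g‖ ^ 2) * T :=
    calc T * T = ‖inner 𝕜 w g‖ ^ 2 := by
          rw [inner_w_g, RCLike.norm_of_nonneg T_nonneg, sq]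
      _ ≤ (‖w‖ * ‖g‖) ^ 2 := by gcongr; exact norm_inner_le_norm w g
      _ = ‖w‖ ^ 2 * ‖g‖ ^ 2 := mul_pow _ _ _
      _ ≤ (B * T) * ‖g‖ ^ 2 := by gcongr
      _ = (B * ‖g‖ ^ 2) * T := by ring
  rcases T_nonneg.eq_or_lt with T_zero | T_pos
  · rw [← T_zero]; positivity
  · exact le_of_mul_le_mul_right T_sq T_pos

lemma sum_iSup_eq_iSup_sum_selection {α ι : Type*} [Nonempty ι] (X : Finset α)
    (a : α → ι → ℝ≥0∞) :
    ∑ x ∈ X, ⨆ i, a x i = ⨆ s : α → ι, ∑ x ∈ X, a x (s x) := by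
  have directed (s s' : α → ι) :
      ∃ u : α → ι, ∀ x, a x (s x) ≤ a x (u x) ∧ a x (s' x) ≤ a x (u x) := by
    choose u hu using fun x => Std.Total.directed (r := (· ≤ ·)) (a x) (s x) (s' x)
    exact ⟨u, hu⟩
  rw [← ENNReal.finsetSum_iSup directed]
  exact Finset.sum_congr rfl fun x _ =>
    ((Function.surjective_eval (β := fun _ : α => ι) x).iSup_comp (a x)).symm

/-! ### Fourier decay of dilated bumps -/

lemma e2pi_eq_fourierChar (t : ℝ) : e2pi t = 𝐞 t := by
  rw [e2pi, Real.fourierChar_apply]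
  push_cast
  ring_nf

lemma e2pi_add (s t : ℝ) : e2pi (s + t) = e2pi s * e2pi t := by
  simp [e2pi_eq_fourierChar, AddChar.map_add_eq_mul]

lemma conj_e2pi (t : ℝ) : conj (e2pi t) = e2pi (-t) := by
  simp [e2pi_eq_fourierChar, AddChar.map_neg_eq_inv]

@[fun_prop]
lemma continuous_e2pi : Continuous e2pi := by
  unfold e2pi; fun_prop

lemma integral_mul_e2pi_eq_fourier (g : ℝ → ℂ) (s : ℝ) :
    ∫ x, g x * e2pi (s * x) = 𝓕 g (-s) := by
  rw [Real.fourier_real_eq]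
  refine integral_congr_ae (.of_forall fun x => ?_)
  simp [e2pi_eq_fourierChar, Circle.smul_def, mul_comm]

lemma hasCompactSupport_iteratedDeriv {𝕜 F : Type*} [NontriviallyNormedField 𝕜]
    [NormedAddCommGroup F] [NormedSpace 𝕜 F] {g : 𝕜 → F} (hg : HasCompactSupport g) (n : ℕ) :
    HasCompactSupport (iteratedDeriv n g) := by
  induction n with
  | zero => simpa
  | succ n ih => rw [iteratedDeriv_succ]; exact ih.deriv

lemma integrable_iteratedDeriv {F : Type*} [NormedAddCommGroup F] [NormedSpace ℝ F] {g : ℝ → F}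
    {N : ℕ∞} {n : ℕ} (hg : ContDiff ℝ N g) (hgc : HasCompactSupport g) (hn : n ≤ N) :
    Integrable (iteratedDeriv n g) :=
  (hg.continuous_iteratedDeriv n (mod_cast hn)).integrable_of_hasCompactSupport
    (hasCompactSupport_iteratedDeriv hgc n)

lemma one_add_sq_mul_norm_fourier_le {g : ℝ → ℂ} (hg : ContDiff ℝ 2 g)
    (hgc : HasCompactSupport g) (s : ℝ) :
    (1 + s ^ 2) * ‖𝓕 g s‖ ≤ (∫ x, ‖g x‖) + ∫ x, ‖iteratedDeriv 2 g x‖ := by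
  have norm_fourier_le (h : ℝ → ℂ) : ‖𝓕 h s‖ ≤ ∫ x, ‖h x‖ :=
    VectorFourier.norm_fourierIntegral_le_integral_norm _ _ _ _ _
  have fourier_second_deriv : 𝓕 (iteratedDeriv 2 g) s = (2 * Real.pi * Complex.I * s) ^ 2 • 𝓕 g s :=
    congrFun (Real.fourier_iteratedDeriv (N := 2) (n := 2) hg
      (fun _ hn => integrable_iteratedDeriv hg hgc hn) le_rfl) s
  have norm_symbol : ‖(2 * Real.pi * Complex.I * s : ℂ) ^ 2‖ = (2 * Real.pi) ^ 2 * s ^ 2 := by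
    simp [mul_pow]
  calc (1 + s ^ 2) * ‖𝓕 g s‖ ≤ ‖𝓕 g s‖ + (2 * Real.pi) ^ 2 * s ^ 2 * ‖𝓕 g s‖ := by
        rw [add_mul, one_mul]
        gcongr
        exact le_mul_of_one_le_left (sq_nonneg s) (by nlinarith [Real.pi_gt_three])
    _ = ‖𝓕 g s‖ + ‖𝓕 (iteratedDeriv 2 g) s‖ := by
        rw [fourier_second_deriv, norm_smul, norm_symbol]
    _ ≤ _ := add_le_add (norm_fourier_le g) (norm_fourier_le _)

lemma exists_norm_iteratedDeriv_le {F : Type*} [NormedAddCommGroup F] [NormedSpace ℝ F]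
    {g : ℝ → F} {N : ℕ} (hg : ContDiff ℝ N g) (hgc : HasCompactSupport g) :
    ∃ M, ∀ n ≤ N, ∀ x, ‖iteratedDeriv n g x‖ ≤ M := by
  choose M hM using fun n : Set.Iic N =>
    (hasCompactSupport_iteratedDeriv hgc n).exists_bound_of_continuous
      (hg.continuous_iteratedDeriv n (mod_cast n.2))
  obtain ⟨M', hM'⟩ := (Set.finite_range M).bddAbove
  exact ⟨M', fun n hn x => (hM ⟨n, hn⟩ x).trans (hM' ⟨⟨n, hn⟩, rfl⟩)⟩

lemma norm_iteratedDeriv_comp_mul_left_le {F : Type*} [NormedAddCommGroup F] [NormedSpace ℝ F]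
    {g : ℝ → F} {n : ℕ} (hg : ContDiff ℝ n g) {M : ℝ} (hM : ∀ x, ‖iteratedDeriv n g x‖ ≤ M)
    {ε : ℝ} (hε₀ : 0 ≤ ε) (hε₁ : ε ≤ 1) (x : ℝ) :
    ‖iteratedDeriv n (fun y => g (ε * y)) x‖ ≤ M := by
  rw [iteratedDeriv_comp_const_smul hg, norm_smul, Real.norm_of_nonneg (by positivity)]
  exact (mul_le_of_le_one_left (norm_nonneg _) (pow_le_one₀ hε₀ hε₁)).trans (hM _)

lemma exists_norm_fourier_comp_mul_left_mul_le {φ ψ : ℝ → ℂ} (hφ : ContDiff ℝ 2 φ)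
    (hφc : HasCompactSupport φ) (hψ : ContDiff ℝ 2 ψ) (hψc : HasCompactSupport ψ) :
    ∃ A, ∀ ε, 0 ≤ ε → ε ≤ 1 → ∀ s,
      ‖𝓕 (fun x => φ (ε * x) * ψ x) s‖ ≤ A / (1 + s ^ 2) := by
  obtain ⟨M, hM⟩ := exists_norm_iteratedDeriv_le hφ hφc
  let B (x : ℝ) : ℝ := ∑ i ∈ Finset.range 3, (Nat.choose 2 i : ℝ) * M * ‖iteratedDeriv (2 - i) ψ x‖
  refine ⟨(∫ x, M * ‖ψ x‖) + ∫ x, B x, fun ε hε₀ hε₁ s => ?_⟩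
  let φε : ℝ → ℂ := fun x => φ (ε * x)
  have hφε : ContDiff ℝ 2 φε := by fun_prop
  have φε_le {n : ℕ} (hn : n ≤ 2) (x : ℝ) : ‖iteratedDeriv n φε x‖ ≤ M :=
    norm_iteratedDeriv_comp_mul_left_le (hφ.of_le (mod_cast hn)) (hM n hn) hε₀ hε₁ x
  have second_deriv_le (x : ℝ) : ‖iteratedDeriv 2 (fun y => φε y * ψ y) x‖ ≤ B x := by
    rw [← norm_iteratedFDeriv_eq_norm_iteratedDeriv]
    refine (norm_iteratedFDeriv_mul_le hφε hψ x le_rfl).trans ?_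
    simp_rw [norm_iteratedFDeriv_eq_norm_iteratedDeriv]
    unfold B
    gcongr with i hi
    exact φε_le (Nat.lt_succ_iff.1 (Finset.mem_range.1 hi)) x
  rw [le_div_iff₀' (by positivity)]
  refine (one_add_sq_mul_norm_fourier_le (hφε.mul hψ) hψc.mul_left s).trans (add_le_add ?_ ?_)
  · refine integral_mono_of_nonneg (.of_forall fun _ => norm_nonneg _) ?_
      (.of_forall fun x => ?_)
    · exact (hψ.continuous.integrable_of_hasCompactSupport hψc).norm.const_mul M
    · exact (norm_mul_le _ _).trans
        (mul_le_mul_of_nonneg_right (φε_le zero_le_two x) (norm_nonneg _))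
  · refine integral_mono_of_nonneg (.of_forall fun _ => norm_nonneg _) ?_
      (.of_forall second_deriv_le)
    refine integrable_finsetSum _ fun i _ => ?_
    exact (integrable_iteratedDeriv (N := 2) hψ hψc (mod_cast Nat.sub_le 2 i)).norm.const_mul _

lemma exists_norm_integral_dilate_mul_dilate_le_of_le {φ ψ : ℝ → ℂ} (hφ : ContDiff ℝ 2 φ)
    (hφc : HasCompactSupport φ) (hψ : ContDiff ℝ 2 ψ) (hψc : HasCompactSupport ψ) :
    ∃ A, ∀ s t, 0 < s → s ≤ t → ∀ w,
      ‖∫ x, φ (s * x) * ψ (t * x) * e2pi (w * x)‖ ≤ A * poissonKer t w := by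
  obtain ⟨A, hA⟩ := exists_norm_fourier_comp_mul_left_mul_le hφ hφc hψ hψc
  refine ⟨A, fun s t hs hst w => ?_⟩
  have ht : 0 < t := hs.trans_le hst
  let g (x : ℝ) : ℂ := φ (s / t * x) * ψ x
  have rescale : ∫ x, φ (s * x) * ψ (t * x) * e2pi (w * x) = t⁻¹ • 𝓕 g (-(w / t)) := by
    rw [← integral_mul_e2pi_eq_fourier, ← abs_of_pos (inv_pos.2 ht),
      ← Measure.integral_comp_mul_left (fun x => g x * e2pi (w / t * x))]
    refine integral_congr_ae (.of_forall fun x => ?_)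
    simp only [g, ← mul_assoc, div_mul_cancel₀ _ ht.ne']
  calc ‖∫ x, φ (s * x) * ψ (t * x) * e2pi (w * x)‖ = t⁻¹ * ‖𝓕 g (-(w / t))‖ := by
        rw [rescale, norm_smul, Real.norm_of_nonneg (inv_pos.2 ht).le]
    _ ≤ t⁻¹ * (A / (1 + (-(w / t)) ^ 2)) := by
        gcongr
        exact hA _ (by positivity) ((div_le_one ht).2 hst) _
    _ = A * poissonKer t w := by
        unfold poissonKer
        field_simp

lemma exists_norm_integral_dilate_mul_dilate_le {φ ψ : ℝ → ℂ} (hφ : ContDiff ℝ 2 φ)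
    (hφc : HasCompactSupport φ) (hψ : ContDiff ℝ 2 ψ) (hψc : HasCompactSupport ψ) :
    ∃ A, 0 < A ∧ ∀ s t, 0 < s → 0 < t → ∀ w,
      ‖∫ x, φ (s * x) * ψ (t * x) * e2pi (w * x)‖ ≤ A * (poissonKer s w + poissonKer t w) := by
  obtain ⟨A, hA⟩ := exists_norm_integral_dilate_mul_dilate_le_of_le hφ hφc hψ hψc
  obtain ⟨B, hB⟩ := exists_norm_integral_dilate_mul_dilate_le_of_le hψ hψc hφ hφc
  refine ⟨max 1 (max A B), by positivity, fun s t hs ht w => ?_⟩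
  have Ks_nonneg := poissonKer_nonneg hs.le w
  have Kt_nonneg := poissonKer_nonneg ht.le w
  rcases le_total s t with hst | hts
  · refine (hA s t hs hst w).trans ?_
    gcongr
    exacts [le_max_of_le_right (le_max_left _ _), le_add_of_nonneg_left Ks_nonneg]
  · simp_rw [mul_comm (φ _)]
    refine (hB t s ht hts w).trans ?_
    gcongr
    exacts [le_max_of_le_right (le_max_right _ _), le_add_of_nonneg_right Kt_nonneg]

/-! ### Single-frequency estimate on a residue class -/

lemma inner_toLp_toLp {α 𝕜 E : Type*} [RCLike 𝕜] [NormedAddCommGroup E] [InnerProductSpace 𝕜 E]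
    {m : MeasurableSpace α} {μ : Measure α} {f g : α → E} (hf : MemLp f 2 μ) (hg : MemLp g 2 μ) :
    inner 𝕜 (hf.toLp f) (hg.toLp g) = ∫ x, inner 𝕜 (f x) (g x) ∂μ := by
  rw [L2.inner_def]
  refine integral_congr_ae ?_
  filter_upwards [hf.coeFn_toLp, hg.coeFn_toLp] with x hfx hgx
  rw [hfx, hgx]

lemma norm_toLp_sq {α 𝕜 : Type*} [RCLike 𝕜] {m : MeasurableSpace α} {μ : Measure α} {f : α → 𝕜}
    (hf : MemLp f 2 μ) : ‖hf.toLp f‖ ^ 2 = ∫ x, ‖f x‖ ^ 2 ∂μ := by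
  have h : ((‖hf.toLp f‖ ^ 2 : ℝ) : 𝕜) = ((∫ x, ‖f x‖ ^ 2 ∂μ : ℝ) : 𝕜) := by
    rw [← integral_ofReal, RCLike.ofReal_pow, ← inner_self_eq_norm_sq_to_K, inner_toLp_toLp]
    simp_rw [inner_self_eq_norm_sq_to_K, RCLike.ofReal_pow]
  exact_mod_cast h

lemma sum_norm_integral_mul_sq_le {α Ω 𝕜 : Type*} [RCLike 𝕜] {m : MeasurableSpace Ω}
    {μ : Measure Ω} {X : Finset α} {v : α → Ω → 𝕜} (hv : ∀ x, MemLp (v x) 2 μ) {B : ℝ} (hB : 0 ≤ B)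
    (hgram : ∀ a : α → ℝ, (∀ x ∈ X, 0 ≤ a x) →
      ∑ x ∈ X, ∑ y ∈ X, a x * a y * ‖∫ ω, v x ω * conj (v y ω) ∂μ‖ ≤ B * ∑ x ∈ X, a x ^ 2)
    {g : Ω → 𝕜} (hg : MemLp g 2 μ) :
    ∑ x ∈ X, ‖∫ ω, v x ω * g ω ∂μ‖ ^ 2 ≤ B * ∫ ω, ‖g ω‖ ^ 2 ∂μ := by
  have hv' (x : α) : MemLp (fun ω => conj (v x ω)) 2 μ := (hv x).star
  have inner_v_g (x : α) : inner 𝕜 ((hv' x).toLp _) (hg.toLp g) = ∫ ω, v x ω * g ω ∂μ := by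
    simp [inner_toLp_toLp, mul_comm]
  have inner_v_v (x y : α) :
      inner 𝕜 ((hv' x).toLp _) ((hv' y).toLp _) = ∫ ω, v x ω * conj (v y ω) ∂μ := by
    simp [inner_toLp_toLp, mul_comm]
  simp_rw [← inner_v_v] at hgram
  simpa only [inner_v_g, norm_toLp_sq] using sum_norm_inner_sq_le hB hgram (hg.toLp g)

/-- The bump `χ` has correlations at most `A`: modulated correlations of two dilates of `χ` are
bounded by `A` times the Poisson kernels at the two scales. -/
def CorrelationBound (χ : ℝ → ℂ) (A : ℝ) : Prop :=
  ∀ s t, 0 < s → 0 < t → ∀ w,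
    ‖∫ x, χ (s * x) * conj (χ (t * x)) * e2pi (w * x)‖ ≤ A * (poissonKer s w + poissonKer t w)

lemma CorrelationBound.nonneg {χ : ℝ → ℂ} {A : ℝ} (h : CorrelationBound χ A) : 0 ≤ A := by
  have h' := (norm_nonneg _).trans (h 1 1 one_pos one_pos 0)
  norm_num [poissonKer] at h'
  linarith

lemma exists_correlationBound {χ : ℝ → ℂ} (hχ : ContDiff ℝ 2 χ) (hχc : HasCompactSupport χ) :
    ∃ A, 0 < A ∧ CorrelationBound χ A :=
  exists_norm_integral_dilate_mul_dilate_le hχ hχc (Complex.conjCLE.contDiff.comp hχ)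
    (hχc.comp_left (map_zero conj))

lemma sum_sum_mul_poissonKer_le {D : ℕ} (hD : D ≠ 0) {X : Finset ℤ}
    (hX : ∀ x ∈ X, ∀ y ∈ X, (D : ℤ) ∣ x - y) {t : ℤ → ℝ} (ht : ∀ x, D ≤ t x) {a : ℤ → ℝ}
    (ha : ∀ x ∈ X, 0 ≤ a x) :
    ∑ x ∈ X, ∑ y ∈ X, a x * a y * poissonKer (t x) (x - y) ≤ 48 / D * ∑ x ∈ X, a x ^ 2 := by
  have t_pos (x : ℤ) : 0 < t x := (Nat.cast_pos.2 hD.bot_lt).trans_le (ht x)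
  refine (sum_sum_mul_le_of_mul_le (c := 2) (S := 6 / D) zero_le_two (by positivity)
    (fun x _ y _ => poissonKer_nonneg (t_pos x).le _) (fun x _ y _ z _ => ?_)
    (fun x hx => sum_poissonKer_sub_le_of_dvd hD (ht x) (hX x hx)) ha).trans_eq (by ring)
  have h := poissonKer_mul_le (t_pos x) (t_pos y) (x - z) (z - y)
  rwa [sub_add_sub_cancel, poissonKer_sub_comm (t y) z, poissonKer_sub_comm (t y) x] at h

lemma CorrelationBound.sum_sum_le {χ : ℝ → ℂ} {A : ℝ} (h : CorrelationBound χ A)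
    {D : ℕ} (hD : D ≠ 0) {X : Finset ℤ} (hX : ∀ x ∈ X, ∀ y ∈ X, (D : ℤ) ∣ x - y) {t : ℤ → ℝ}
    (ht : ∀ x, D ≤ t x) {a : ℤ → ℝ} (ha : ∀ x ∈ X, 0 ≤ a x) :
    ∑ x ∈ X, ∑ y ∈ X, a x * a y *
      ‖∫ θ, χ (t x * θ) * e2pi (x * θ) * conj (χ (t y * θ) * e2pi (y * θ))‖ ≤
        96 * A / D * ∑ x ∈ X, a x ^ 2 := by
  have t_pos (x : ℤ) : 0 < t x := (Nat.cast_pos.2 hD.bot_lt).trans_le (ht x)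
  let k (x y : ℤ) : ℝ := poissonKer (t x) (x - y)
  have correlation_le (x y : ℤ) :
      ‖∫ θ, χ (t x * θ) * e2pi (x * θ) * conj (χ (t y * θ) * e2pi (y * θ))‖ ≤
        A * (k x y + k y x) := by
    have e (θ : ℝ) : χ (t x * θ) * e2pi (x * θ) * conj (χ (t y * θ) * e2pi (y * θ)) =
        χ (t x * θ) * conj (χ (t y * θ)) * e2pi ((x - y) * θ) := by
      rw [map_mul, conj_e2pi, sub_mul, sub_eq_add_neg, e2pi_add]
      ring
    simp_rw [e, k]
    rw [poissonKer_sub_comm (t y)]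
    exact h _ _ (t_pos x) (t_pos y) _
  calc ∑ x ∈ X, ∑ y ∈ X, a x * a y *
        ‖∫ θ, χ (t x * θ) * e2pi (x * θ) * conj (χ (t y * θ) * e2pi (y * θ))‖
      ≤ ∑ x ∈ X, ∑ y ∈ X, a x * a y * (A * (k x y + k y x)) := by
        refine Finset.sum_le_sum fun x hx => Finset.sum_le_sum fun y hy => ?_
        exact mul_le_mul_of_nonneg_left (correlation_le x y) (mul_nonneg (ha x hx) (ha y hy))
    _ = A * (2 * ∑ x ∈ X, ∑ y ∈ X, a x * a y * k x y) := by
        rw [← sum_sum_mul_mul_add_swap]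
        simp_rw [Finset.mul_sum, mul_left_comm A]
    _ ≤ A * (2 * (48 / D * ∑ x ∈ X, a x ^ 2)) := by
        refine mul_le_mul_of_nonneg_left ?_ h.nonneg
        gcongr
        exact sum_sum_mul_poissonKer_le hD hX ht ha
    _ = 96 * A / D * ∑ x ∈ X, a x ^ 2 := by ring

lemma memLp_dilate_mul_e2pi {χ : ℝ → ℂ} (hχ : Continuous χ) (hχc : HasCompactSupport χ) {t : ℝ}
    (ht : t ≠ 0) (w : ℝ) (p : ℝ≥0∞) : MemLp (fun θ => χ (t * θ) * e2pi (w * θ)) p :=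
  Continuous.memLp_of_hasCompactSupport (by fun_prop) (hχc.comp_smul ht).mul_right

lemma CorrelationBound.sum_norm_integral_sq_le {χ : ℝ → ℂ} {A : ℝ} (h : CorrelationBound χ A)
    (hχ : Continuous χ) (hχc : HasCompactSupport χ) {D : ℕ} (hD : D ≠ 0)
    {X : Finset ℤ} (hX : ∀ x ∈ X, ∀ y ∈ X, (D : ℤ) ∣ x - y) {t : ℤ → ℝ} (ht : ∀ x, D ≤ t x)
    {G : ℝ → ℂ} (hG : MemLp G 2) :
    ∑ x ∈ X, ‖∫ θ, χ (t x * θ) * e2pi (x * θ) * G θ‖ ^ 2 ≤ 96 * A / D * ∫ θ, ‖G θ‖ ^ 2 :=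
  sum_norm_integral_mul_sq_le
    (fun x => memLp_dilate_mul_e2pi hχ hχc ((Nat.cast_pos.2 hD.bot_lt).trans_le (ht x)).ne' x 2)
    (by have := h.nonneg; positivity) (fun _ => h.sum_sum_le hD hX ht) hG

/-! ### Superposition of frequencies with a common denominator -/

lemma sum_norm_sum_addChar_mul_sq {R ι : Type*} [CommRing R] [Fintype R] [Fintype ι]
    {ψ : AddChar R ℂ} (hψ : ψ.IsPrimitive) {p : ι → R} (hp : Function.Injective p) (c : ι → ℂ) :
    ∑ u, ‖∑ j, ψ (u * p j) * c j‖ ^ 2 = Fintype.card R * ∑ j, ‖c j‖ ^ 2 := by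
  classical
  have orthogonality (i j : ι) :
      ∑ u, ψ (u * (p i - p j)) = if i = j then (Fintype.card R : ℂ) else 0 := by
    rw [AddChar.sum_mulShift _ hψ]
    simp [sub_eq_zero, hp.eq_iff]
  have expand (u : R) : ((‖∑ j, ψ (u * p j) * c j‖ ^ 2 : ℝ) : ℂ) =
      ∑ i, ∑ j, c i * conj (c j) * ψ (u * (p i - p j)) := by
    push_cast
    rw [← Complex.mul_conj', map_sum, Finset.sum_mul_sum]
    refine Finset.sum_congr rfl fun i _ => Finset.sum_congr rfl fun j _ => ?_
    rw [map_mul conj, ← AddChar.map_neg_eq_conj, mul_sub, sub_eq_add_neg, AddChar.map_add_eq_mul]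
    ring
  have complex_identity : ((∑ u, ‖∑ j, ψ (u * p j) * c j‖ ^ 2 : ℝ) : ℂ) =
      ((Fintype.card R * ∑ j, ‖c j‖ ^ 2 : ℝ) : ℂ) := by
    rw [Complex.ofReal_sum]
    simp_rw [expand]
    rw [Finset.sum_comm]
    simp_rw [Finset.sum_comm (s := (Finset.univ : Finset R)), ← Finset.mul_sum, orthogonality]
    simp [Complex.mul_conj', Finset.mul_sum, mul_comm]
  exact_mod_cast complex_identity

lemma e2pi_intCast_mul_div (D : ℕ) [NeZero D] (x m : ℤ) :
    e2pi (x * (m / D)) = ZMod.stdAddChar (x * m : ZMod D) := by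
  rw [← Int.cast_mul, ZMod.stdAddChar_coe, e2pi]
  push_cast
  ring_nf

lemma sum_setIntegral_le_integral_of_pairwise_disjoint {Ω ι : Type*} [Fintype ι]
    {m : MeasurableSpace Ω} {μ : Measure Ω} {s : ι → Set Ω} (hs : ∀ j, MeasurableSet (s j))
    (hd : Pairwise (Function.onFun Disjoint s)) {g : Ω → ℝ} (hg : Integrable g μ) (hg0 : 0 ≤ g) :
    ∑ j, ∫ ω in s j, g ω ∂μ ≤ ∫ ω, g ω ∂μ := by
  rw [← integral_iUnion_fintype hs hd fun _ => hg.integrableOn]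
  exact setIntegral_le_integral hg (.of_forall hg0)

lemma pairwise_disjoint_ball_intCast_div {ι : Type*} {p : ι → ℤ} (hp : Function.Injective p)
    {D : ℝ} (hD : 0 < D) :
    Pairwise (Function.onFun Disjoint fun j => Metric.ball (p j / D : ℝ) (1 / (2 * D))) := by
  refine fun i j hij => Metric.ball_disjoint_ball ?_
  have one_le_abs_sub : (1 : ℝ) ≤ |(p i : ℝ) - p j| := by
    exact_mod_cast Int.one_le_abs (sub_ne_zero.2 (hp.ne hij))
  calc 1 / (2 * D) + 1 / (2 * D) = 1 / D := by field_simp; norm_num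
    _ ≤ |(p i : ℝ) - p j| / D := by gcongr
    _ = dist (p i / D : ℝ) (p j / D) := by rw [Real.dist_eq, ← sub_div, abs_div, abs_of_pos hD]

lemma setIntegral_ball_zero_comp_add_right {E F : Type*} [NormedAddCommGroup E]
    [MeasurableSpace E] [BorelSpace E] [NormedAddCommGroup F] [NormedSpace ℝ F] {μ : Measure E}
    [μ.IsAddRightInvariant] (g : E → F) (a : E) (r : ℝ) :
    ∫ x in Metric.ball 0 r, g (x + a) ∂μ = ∫ x in Metric.ball a r, g x ∂μ := by
  have h := (measurePreserving_add_right μ a).setIntegral_preimage_emb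
    (measurableEmbedding_addRight a) g (Metric.ball a r)
  rwa [show (· + a) ⁻¹' Metric.ball a r = Metric.ball 0 r by ext; simp] at h

/-- The linear combination `∑ⱼ ∫ χ(t(θ - pⱼ/D)) F(θ) e(xθ) dθ` of the frequency localisations of
`F` to the arcs of width `1/t` around the rationals `pⱼ/D`. -/
def multifrequencySum {ι : Type*} [Fintype ι] (χ : ℝ → ℂ) (D : ℕ) (p : ι → ℤ) (F : ℝ → ℂ) (t : ℝ)
    (x : ℤ) : ℂ :=
  ∑ j, ∫ θ, χ (t * (θ - p j / D)) * F θ * e2pi (x * θ)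

/-- The sum over `j` of the pieces of `F` on the arcs of radius `1/(2D)` around `pⱼ/D`, moved to the
origin and weighted by the phases `e(u pⱼ/D)`: on the residue class `x ≡ u` mod `D`, the
multifrequency sum of `F` is the single-frequency sum of this function. -/
def residueProfile {ι : Type*} [Fintype ι] (D : ℕ) [NeZero D] (p : ι → ℤ) (F : ℝ → ℂ)
    (u : ZMod D) : ℝ → ℂ :=
  (Metric.ball 0 (1 / (2 * D))).indicator
    fun θ => ∑ j, ZMod.stdAddChar (u * p j : ZMod D) * F (θ + p j / D)

lemma hasCompactSupport_of_support_subset_ball {α β : Type*} [PseudoMetricSpace α] [ProperSpace α]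
    [Zero β] {f : α → β} {x : α} {r : ℝ} (hf : Function.support f ⊆ Metric.ball x r) :
    HasCompactSupport f :=
  .of_support_subset_isCompact (isCompact_closedBall x r) (hf.trans Metric.ball_subset_closedBall)

section ResidueProfile

variable {ι : Type*} [Fintype ι] {D : ℕ} [NeZero D] {p : ι → ℤ} {F : ℝ → ℂ}

lemma memLp_residueProfile {q : ℝ≥0∞} (hF : MemLp F q) (u : ZMod D) :
    MemLp (residueProfile D p F u) q :=
  (memLp_finsetSum _ fun j _ => (hF.comp_measurePreserving
    (measurePreserving_add_right volume (p j / D : ℝ))).const_mul _).indicator measurableSet_ball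

lemma sum_norm_residueProfile_sq (hp : Function.Injective fun j => (p j : ZMod D)) (θ : ℝ) :
    ∑ u, ‖residueProfile D p F u θ‖ ^ 2 =
      D * ∑ j, (Metric.ball 0 (1 / (2 * D))).indicator (fun θ => ‖F (θ + p j / D)‖ ^ 2) θ := by
  by_cases hθ : θ ∈ Metric.ball (0 : ℝ) (1 / (2 * D))
  · simp only [residueProfile, Set.indicator_of_mem hθ]
    rw [sum_norm_sum_addChar_mul_sq (ZMod.isPrimitive_stdAddChar D) hp, ZMod.card]
  · simp only [residueProfile, Set.indicator_of_notMem hθ, norm_zero, zero_pow two_ne_zero,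
      Finset.sum_const_zero, mul_zero]

lemma sum_integral_norm_residueProfile_sq_le (hp : Function.Injective fun j => (p j : ZMod D))
    (hF : MemLp F 2) :
    ∑ u, ∫ θ, ‖residueProfile D p F u θ‖ ^ 2 ≤ D * ∫ θ, ‖F θ‖ ^ 2 := by
  have hF2 : Integrable fun θ => ‖F θ‖ ^ 2 := hF.integrable_norm_pow two_ne_zero
  have hFj (j : ι) : Integrable
      ((Metric.ball 0 (1 / (2 * D))).indicator fun θ => ‖F (θ + p j / D)‖ ^ 2) :=
    (hF2.comp_add_right _).indicator measurableSet_ball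
  calc ∑ u, ∫ θ, ‖residueProfile D p F u θ‖ ^ 2
      = D * ∑ j, ∫ θ in Metric.ball (p j / D : ℝ) (1 / (2 * D)), ‖F θ‖ ^ 2 := by
        rw [← integral_finsetSum _ fun u _ =>
          (memLp_residueProfile hF u).integrable_norm_pow two_ne_zero]
        simp_rw [sum_norm_residueProfile_sq hp]
        rw [integral_const_mul, integral_finsetSum _ fun j _ => hFj j]
        simp_rw [integral_indicator measurableSet_ball]
        simp_rw [setIntegral_ball_zero_comp_add_right (fun θ => ‖F θ‖ ^ 2)]
    _ ≤ D * ∫ θ, ‖F θ‖ ^ 2 := by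
        gcongr
        exact sum_setIntegral_le_integral_of_pairwise_disjoint (fun _ => measurableSet_ball)
          (pairwise_disjoint_ball_intCast_div (hp.of_comp (f := fun m : ℤ => (m : ZMod D)))
            (Nat.cast_pos.2 (NeZero.pos D))) hF2 fun _ => sq_nonneg _

lemma multifrequencySum_eq_integral {χ : ℝ → ℂ} (hχ : Continuous χ)
    (hχ0 : Function.support χ ⊆ Metric.ball 0 (1 / 2)) (hF : MemLp F 2) {t : ℝ} (ht : D ≤ t)
    (x : ℤ) :
    multifrequencySum χ D p F t x =
      ∫ θ, χ (t * θ) * e2pi (x * θ) * residueProfile D p F x θ := by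
  have D_pos : (0 : ℝ) < D := Nat.cast_pos.2 (NeZero.pos D)
  have t_pos : 0 < t := D_pos.trans_le ht
  have dilate_eq_zero {θ : ℝ} (hθ : θ ∉ Metric.ball 0 (1 / (2 * D))) : χ (t * θ) = 0 := by
    by_contra hne
    have htθ : t * |θ| < 1 / 2 := by
      simpa [abs_mul, abs_of_pos t_pos] using hχ0 hne
    refine hθ (mem_ball_zero_iff.2 ?_)
    rw [Real.norm_eq_abs, lt_div_iff₀ (by positivity)]
    nlinarith [mul_le_mul_of_nonneg_right ht (abs_nonneg θ)]
  have hχc := hasCompactSupport_of_support_subset_ball hχ0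
  have translate (j : ι) : ∫ θ, χ (t * (θ - p j / D)) * F θ * e2pi (x * θ) =
      ∫ θ, χ (t * θ) * e2pi (x * θ) *
        (ZMod.stdAddChar (x * p j : ZMod D) * F (θ + p j / D)) := by
    rw [← integral_add_right_eq_self _ (p j / D : ℝ)]
    refine integral_congr_ae (.of_forall fun θ => ?_)
    simp only [add_sub_cancel_right, mul_add, e2pi_add, e2pi_intCast_mul_div]
    ring
  rw [multifrequencySum]
  simp_rw [translate]
  rw [← integral_finsetSum]
  · refine integral_congr_ae (.of_forall fun θ => ?_)
    simp only [← Finset.mul_sum, residueProfile]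
    by_cases hθ : θ ∈ Metric.ball (0 : ℝ) (1 / (2 * D))
    · rw [Set.indicator_of_mem hθ]
    · simp [dilate_eq_zero hθ]
  · exact fun j _ => (memLp_dilate_mul_e2pi hχ hχc t_pos.ne' x 2).integrable_mul (q := 2)
      ((hF.comp_measurePreserving (measurePreserving_add_right _ (p j / D : ℝ))).const_mul _)

theorem CorrelationBound.sum_norm_multifrequencySum_sq_le {χ : ℝ → ℂ} {A : ℝ}
    (h : CorrelationBound χ A) (hχ : Continuous χ)
    (hχ0 : Function.support χ ⊆ Metric.ball 0 (1 / 2))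
    (hp : Function.Injective fun j => (p j : ZMod D)) (hF : MemLp F 2) (X : Finset ℤ) {t : ℤ → ℝ}
    (ht : ∀ x, D ≤ t x) :
    ∑ x ∈ X, ‖multifrequencySum χ D p F (t x) x‖ ^ 2 ≤ 96 * A * ∫ θ, ‖F θ‖ ^ 2 := by
  have residue_class_le (u : ZMod D) :
      ∑ x ∈ X with Int.cast x = u, ‖multifrequencySum χ D p F (t x) x‖ ^ 2 ≤
        96 * A / D * ∫ θ, ‖residueProfile D p F u θ‖ ^ 2 := by
    refine le_of_eq_of_le (Finset.sum_congr rfl fun x hx => ?_)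
      (h.sum_norm_integral_sq_le hχ (hasCompactSupport_of_support_subset_ball hχ0) (NeZero.ne D)
        (fun x hx y hy => ?_) ht (memLp_residueProfile hF u))
    · rw [multifrequencySum_eq_integral hχ hχ0 hF (ht x), (Finset.mem_filter.1 hx).2]
    · rw [← ZMod.intCast_eq_intCast_iff_dvd_sub, (Finset.mem_filter.1 hx).2,
        (Finset.mem_filter.1 hy).2]
  calc ∑ x ∈ X, ‖multifrequencySum χ D p F (t x) x‖ ^ 2
      = ∑ u : ZMod D, ∑ x ∈ X with Int.cast x = u, ‖multifrequencySum χ D p F (t x) x‖ ^ 2 :=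
        (Finset.sum_fiberwise _ _ _).symm
    _ ≤ 96 * A / D * ∑ u : ZMod D, ∫ θ, ‖residueProfile D p F u θ‖ ^ 2 := by
        rw [Finset.mul_sum]
        exact Finset.sum_le_sum fun u _ => residue_class_le u
    _ ≤ 96 * A / D * (D * ∫ θ, ‖F θ‖ ^ 2) := by
        have := h.nonneg
        gcongr
        exact sum_integral_norm_residueProfile_sq_le hp hF
    _ = 96 * A * ∫ θ, ‖F θ‖ ^ 2 := by
        have := NeZero.ne (D : ℝ)
        field_simp

end ResidueProfile

/-! ### Fourier series of absolutely summable sequences -/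

/-- The Fourier transform `f̂(θ) = ∑ₖ f(k) e(-kθ)` of a sequence, as a continuous function on the
circle `ℝ / ℤ`; it is `0` unless the series is summable in the uniform norm. -/
def seqFourier (f : ℤ → ℂ) : C(UnitAddCircle, ℂ) := ∑' k, f k • fourier (-k)

lemma enorm_rpow_two {E : Type*} [SeminormedAddGroup E] (a : E) :
    ‖a‖ₑ ^ (2 : ℝ) = ENNReal.ofReal (‖a‖ ^ 2) := by
  rw [ENNReal.rpow_ofNat, ENNReal.ofReal_pow (norm_nonneg _), ofReal_norm]

section SeqFourier

variable {f : ℤ → ℂ}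

lemma hasSum_seqFourier (hf : Summable fun k => ‖f k‖) :
    HasSum (fun k => f k • fourier (-k)) (seqFourier f) :=
  (Summable.of_norm <| by simpa [norm_smul, fourier_norm] using hf).hasSum

lemma seqFourier_coe (hf : Summable fun k => ‖f k‖) (θ : ℝ) :
    seqFourier f θ = ∑' k : ℤ, f k * e2pi (-(k * θ)) := by
  refine ((ContinuousMap.hasSum_apply (hasSum_seqFourier hf) _).tsum_eq.symm).trans
    (tsum_congr fun k => ?_)
  rw [ContinuousMap.smul_apply, fourier_coe_apply, smul_eq_mul, e2pi]
  push_cast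
  ring_nf

lemma fourierCoeff_seqFourier (hf : Summable fun k => ‖f k‖) (n : ℤ) :
    fourierCoeff (seqFourier f) n = f (-n) := by
  have hsum : HasSum (fun k => f k • fourierLp (T := 1) 2 (-k))
      (ContinuousMap.toLp 2 AddCircle.haarAddCircle ℂ (seqFourier f)) := by
    simpa only [Function.comp_def, map_smul] using
      (ContinuousMap.toLp 2 AddCircle.haarAddCircle ℂ).hasSum (hasSum_seqFourier hf)
  have hinner (k : ℤ) : innerSL ℂ (fourierLp (T := 1) 2 n) (f k • fourierLp 2 (-k)) =
      if k = -n then f (-n) else 0 := by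
    rw [map_smul, innerSL_apply_apply, orthonormal_iff_ite.1 orthonormal_fourier]
    by_cases hk : k = -n
    · simp [hk]
    · simp [hk, show n ≠ -k by grind]
  have hsum_inner := (innerSL ℂ (fourierLp (T := 1) 2 n)).hasSum hsum
  simp_rw [hinner] at hsum_inner
  rw [← fourierCoeff_toLp, ← fourierBasis_repr, HilbertBasis.repr_apply_apply, coe_fourierBasis]
  exact hsum_inner.unique (hasSum_ite_eq (-n) (f (-n)))

lemma hasSum_norm_sq_seqFourier (hf : Summable fun k => ‖f k‖) :
    HasSum (fun k => ‖f k‖ ^ 2) (∫ θ in Set.Ioc (0 : ℝ) 1, ‖seqFourier f θ‖ ^ 2) := by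
  have h := hasSum_sq_fourierCoeff
    (ContinuousMap.toLp (E := ℂ) 2 (AddCircle.haarAddCircle (T := 1)) ℂ (seqFourier f))
  simp_rw [fourierCoeff_toLp, fourierCoeff_seqFourier hf] at h
  have hint : ∫ t, ‖ContinuousMap.toLp (E := ℂ) 2 (AddCircle.haarAddCircle (T := 1)) ℂ
      (seqFourier f) t‖ ^ 2 ∂AddCircle.haarAddCircle =
        ∫ θ in Set.Ioc (0 : ℝ) 1, ‖seqFourier f θ‖ ^ 2 :=
    calc
      _ = ∫ t, ‖seqFourier f t‖ ^ 2 ∂AddCircle.haarAddCircle :=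
        integral_congr_ae <| (ContinuousMap.coeFn_toLp _ _).fun_comp fun z => ‖z‖ ^ 2
      _ = ∫ t : UnitAddCircle, ‖seqFourier f t‖ ^ 2 := by
        rw [AddCircle.integral_haarAddCircle, inv_one, one_smul]
      _ = ∫ θ in Set.Ioc (0 : ℝ) 1, ‖seqFourier f θ‖ ^ 2 := by
        simpa only [zero_add] using
          (UnitAddCircle.integral_preimage 0 fun t => ‖seqFourier f t‖ ^ 2).symm
  rw [hint] at h
  exact (Equiv.neg ℤ).hasSum_iff.1 h

lemma memLp_indicator_seqFourier (f : ℤ → ℂ) (p : ℝ≥0∞) :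
    MemLp ((Set.Ioc (0 : ℝ) 1).indicator fun θ => seqFourier f θ) p := by
  rw [memLp_indicator_iff_restrict measurableSet_Ioc]
  refine MemLp.of_bound ?_ ‖seqFourier f‖ (.of_forall fun θ => (seqFourier f).norm_coe_le_norm _)
  exact ((seqFourier f).continuous.comp (AddCircle.continuous_mk' 1)).aestronglyMeasurable

lemma ofReal_integral_norm_sq_indicator_seqFourier (hf : Summable fun k => ‖f k‖) :
    ENNReal.ofReal (∫ θ, ‖(Set.Ioc (0 : ℝ) 1).indicator (fun θ => seqFourier f θ) θ‖ ^ 2) =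
      ∑' k, ‖f k‖ₑ ^ (2 : ℝ) := by
  have parseval := hasSum_norm_sq_seqFourier hf
  simp_rw [enorm_rpow_two]
  rw [← ENNReal.ofReal_tsum_of_nonneg (fun _ => sq_nonneg _) parseval.summable,
    parseval.tsum_eq, ← integral_indicator measurableSet_Ioc]
  congr 2 with θ
  by_cases hθ : θ ∈ Set.Ioc (0 : ℝ) 1 <;> simp only [hθ, Set.indicator_of_mem,
    Set.indicator_of_notMem, not_false_eq_true, norm_zero, ne_eq, OfNat.ofNat_ne_zero, zero_pow]

end SeqFourier

/-! ### The maximal inequality -/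

lemma multifrequencySum_indicator {ι : Type*} [Fintype ι] {s : Set ℝ} (hs : MeasurableSet s)
    (χ : ℝ → ℂ) (D : ℕ) (p : ι → ℤ) (F : ℝ → ℂ) (t : ℝ) (x : ℤ) :
    multifrequencySum χ D p (s.indicator F) t x =
      ∑ j, ∫ θ in s, χ (t * (θ - p j / D)) * F θ * e2pi (x * θ) := by
  refine Finset.sum_congr rfl fun j _ => ?_
  rw [← integral_indicator hs]
  congr 1 with θ
  by_cases hθ : θ ∈ s <;> simp [hθ]

theorem CorrelationBound.tsum_iSup_enorm_multifrequencySum_rpow_le {χ F : ℝ → ℂ} {A : ℝ}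
    {ι : Type*} [Fintype ι] {D : ℕ} [NeZero D] {p : ι → ℤ} (h : CorrelationBound χ A)
    (hχ : Continuous χ) (hχ0 : Function.support χ ⊆ Metric.ball 0 (1 / 2))
    (hp : Function.Injective fun j => (p j : ZMod D)) (hF : MemLp F 2) :
    ∑' x : ℤ, (⨆ (t : ℝ) (_ : D ≤ t), ‖multifrequencySum χ D p F t x‖ₑ) ^ (2 : ℝ) ≤
      ENNReal.ofReal (96 * A * ∫ θ, ‖F θ‖ ^ 2) := by
  have : Nonempty {t : ℝ // D ≤ t} := ⟨⟨D, le_rfl⟩⟩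
  have iSup_rpow_two {κ : Type} (a : κ → ℝ≥0∞) : (⨆ i, a i) ^ (2 : ℝ) = ⨆ i, a i ^ (2 : ℝ) :=
    (ENNReal.orderIsoRpow 2 two_pos).map_iSup a
  rw [ENNReal.tsum_eq_iSup_sum]
  refine iSup_le fun X => ?_
  simp_rw [iSup_subtype', iSup_rpow_two, enorm_rpow_two]
  rw [sum_iSup_eq_iSup_sum_selection]
  refine iSup_le fun t => ?_
  rw [← ENNReal.ofReal_sum_of_nonneg fun _ _ => sq_nonneg _]
  exact ENNReal.ofReal_le_ofReal <|
    h.sum_norm_multifrequencySum_sq_le hχ hχ0 hp hF X fun x => (t x).2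

theorem multifrequency_maximal_general {χ : ℝ → ℂ} (hχ : ContDiff ℝ 2 χ)
    (hχ0 : Function.support χ ⊆ Metric.ball 0 (1 / 2)) :
    ∃ C : ℝ, 0 < C ∧
      ∀ {ι : Type*} [Fintype ι] (D : ℕ) [NeZero D] (p : ι → ℤ),
        Function.Injective (fun j => (p j : ZMod D)) →
          ∀ f : ℤ → ℂ, Summable (fun k => ‖f k‖) →
            (∑' x : ℤ,
                (⨆ (t : ℝ) (_ : D ≤ t),
                  ‖∑ j, ∫ θ in (0 : ℝ)..1,
                    χ (t * (θ - p j / D)) * (∑' k : ℤ, f k * e2pi (-(k * θ))) *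
                      e2pi (x * θ)‖ₑ) ^ (2 : ℝ)) ^ ((1 : ℝ) / 2) ≤
              ENNReal.ofReal C * (∑' k : ℤ, ‖f k‖ₑ ^ (2 : ℝ)) ^ ((1 : ℝ) / 2) := by
  obtain ⟨A, hA, h⟩ := exists_correlationBound hχ (hasCompactSupport_of_support_subset_ball hχ0)
  refine ⟨√(96 * A), by positivity, fun {ι} _ D _ p hp f hf => ?_⟩
  have hsq := h.tsum_iSup_enorm_multifrequencySum_rpow_le hχ.continuous hχ0 hp
    (memLp_indicator_seqFourier f 2)
  rw [ENNReal.ofReal_mul (by positivity), ofReal_integral_norm_sq_indicator_seqFourier hf] at hsq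
  simp_rw [intervalIntegral.integral_of_le zero_le_one, ← seqFourier_coe hf]
  simp_rw [multifrequencySum_indicator measurableSet_Ioc] at hsq
  refine (ENNReal.rpow_le_rpow hsq one_half_pos.le).trans_eq ?_
  rw [ENNReal.mul_rpow_of_nonneg _ _ one_half_pos.le,
    ENNReal.ofReal_rpow_of_nonneg (by positivity) one_half_pos.le, ← Real.sqrt_eq_rpow]

end Multifrequency

theorem multifrequency_maximal (χ : ℝ → ℂ) (hχs : ContDiff ℝ (⊤ : ℕ∞) χ)
    (hχ0 : ∀ x : ℝ, x ∉ Set.Icc (-(1/4) : ℝ) (1/4) → χ x = 0) :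
    ∃ C : ℝ, 0 < C ∧
      ∀ J d D : ℕ, 1 ≤ J → 1 ≤ d → 1 ≤ D → D < 2 ^ d →
        ∀ num : Fin J → ℕ, Function.Injective num → (∀ j, num j < D) →
          ∀ f : ℤ → ℂ, Summable (fun k : ℤ => ‖f k‖) →
            (∑' x : ℤ,
                (⨆ (n : ℕ) (_ : 2 * d < n),
                  (‖∑ j : Fin J,
                      ∫ θ in (0:ℝ)..1,
                        χ ((2 : ℝ) ^ n * (θ - (num j : ℝ) / (D : ℝ))) *
                          (∑' k : ℤ, f k * e2pi (-((k : ℝ) * θ))) *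
                          e2pi ((x : ℝ) * θ)‖₊ : ℝ≥0∞)) ^ (2:ℝ)) ^ ((1:ℝ)/2) ≤
              ENNReal.ofReal C *
                (∑' k : ℤ, (‖f k‖₊ : ℝ≥0∞) ^ (2:ℝ)) ^ ((1:ℝ)/2) := by
  have hsupp : Function.support χ ⊆ Metric.ball 0 (1 / 2) := fun x hx => by
    have hx' := not_imp_comm.1 (hχ0 x) hx
    rw [mem_ball_zero_iff, Real.norm_eq_abs, abs_lt]
    constructor <;> linarith [hx'.1, hx'.2]
  obtain ⟨C, hC, hbound⟩ :=
    multifrequency_maximal_general.{0} (contDiff_infty.1 hχs 2) hsupp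
  refine ⟨C, hC, fun J d D _ _ hD hDd num hinj hnum f hf => ?_⟩
  have : NeZero D := ⟨by omega⟩
  have hinj_mod : Function.Injective fun j => ((num j : ℤ) : ZMod D) := fun i j hij => by
    simp only [Int.cast_natCast, ZMod.natCast_eq_natCast_iff] at hij
    exact hinj (hij.eq_of_lt_of_lt (hnum i) (hnum j))
  refine le_trans ?_ (hbound D (fun j => num j) hinj_mod f hf)
  gcongr with x
  refine iSup₂_le fun n hn => ?_
  have hDn : (D : ℝ) ≤ 2 ^ n :=
    mod_cast hDd.le.trans (Nat.pow_le_pow_right two_pos (by omega))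
  exact le_iSup₂_of_le _ hDn (by simp [enorm_eq_nnnorm])

end
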